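/- arXiv:1907.02308 — 3 statements merged into one kernel-verified Lean document; each statement's English description precedes it below -/
import Mathlib

section
/- Let w be a primitive word of length n over a linearly ordered alphabet Σ and L = abwt(w). Let p be a word with |p| < n such that the set of row indices of M_alt(w) whose rows have p as a prefix is a nonempty interval [b,e]. For a symbol x ∈ Σ, let C be the number of positions t with L[t] ≤ x in the standard order, and set b' = C − rank_x(L, e) and e' = C − rank_x(L, b−1) − 1. Then the set of row indices of M_alt(w) whose rows have xp as a prefix is exactly the interval [b', e']; in particular, if b' > e' then xp is not a circular factor of w, and if b' ≤ e' then [b', e'] is precisely the range of rows of M_alt(w) prefixed by xp. -/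
namespace Paper

variable {α : Type*}

/-- Extended alternating lexicographic strict order; the flag `b` is `true`
when the current position index is even. -/
def altLtAux [LinearOrder α] : Bool → List α → List α → Prop
  | _, [], [] => False
  | b, [], _ :: _ => b = true
  | b, _ :: _, [] => b = false
  | b, c :: x, d :: y => (if b then c < d else d < c) ∨ (c = d ∧ altLtAux (!b) x y)

/-- The alternating lexicographic strict order (positions indexed from 0). -/
def AltLt [LinearOrder α] (x y : List α) : Prop := altLtAux true x y

/-- The reflexive alternating lexicographic order. -/
def AltLe [LinearOrder α] (x y : List α) : Prop := x = y ∨ AltLt x y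

/-- A word is primitive if its cyclic rotations are pairwise distinct. -/
def Primitive (w : List α) : Prop :=
  ∀ i j, i < w.length → j < w.length → w.rotate i = w.rotate j → i = j

/-!
Rotating a row by one letter to the left permutes the rows: it takes row `i` to row `σ i`, whose
last letter is the first letter of row `i`. Two rows with equal first letters compare in the
opposite way to their left rotations: dropping the common letter shifts all parities, and appending
it afterwards decides nothing. Hence `σ` lists the row indices `t` in increasing order of `L t`,
ties being broken by *decreasing* `t`. The `t ∈ [b, e]` with `L t = x` are an interval of this
order, and since `i` is the position of `σ i` in it, counting the `t` below either end gives the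
bounds on `i`.
-/

section AlternatingOrder

variable [LinearOrder α]

theorem altLtAux_not_swap (b : Bool) (x y : List α) : altLtAux (!b) y x ↔ altLtAux b x y := by
  induction x generalizing b y <;> cases y <;> cases b <;> simp_all [altLtAux, eq_comm]

theorem altLtAux_asymm {b : Bool} {x y : List α} (h : altLtAux b x y) : ¬ altLtAux b y x := by
  induction x generalizing b y with
  | nil => cases y <;> simp_all [altLtAux]
  | cons c x ih =>
    cases y with
    | nil => simp_all [altLtAux]
    | cons d y =>
      rcases h with hcd | ⟨rfl, hxy⟩
      · rintro (hdc | ⟨rfl, -⟩) <;> cases b <;> simp_all [lt_asymm hcd]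
      · rintro (hcc | ⟨-, hyx⟩)
        · cases b <;> simp at hcc
        · exact ih hxy hyx

theorem not_altLtAux_self (b : Bool) (x : List α) : ¬ altLtAux b x x :=
  fun h => altLtAux_asymm h h

instance : Std.Asymm (AltLt (α := α)) := ⟨fun _ _ => altLtAux_asymm⟩

theorem altLtAux_append_right (b : Bool) {x y : List α} (h : x.length = y.length) (z : List α) :
    altLtAux b (x ++ z) (y ++ z) ↔ altLtAux b x y := by
  induction x generalizing b y with
  | nil =>
    obtain rfl := List.length_eq_zero_iff.mp h.symm
    simp only [not_altLtAux_self]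
  | cons c x ih =>
    cases y with
    | nil => simp at h
    | cons d y => simp only [List.cons_append, altLtAux, ih _ (Nat.succ.inj h)]

theorem altLt_cons_cons_iff_rotate {c d : α} {x y : List α} (h : x.length = y.length) :
    AltLt (c :: x) (d :: y) ↔
      c < d ∨ c = d ∧ AltLt ((d :: y).rotate 1) ((c :: x).rotate 1) := by
  simp only [AltLt, altLtAux, List.rotate_cons_succ, List.rotate_zero, if_true]
  refine or_congr_right (and_congr_right ?_)
  rintro rfl
  rw [altLtAux_append_right _ h.symm, ← altLtAux_not_swap true, Bool.not_true]

end AlternatingOrder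

theorem getLast?_rotate_one (v : List α) : (v.rotate 1).getLast? = v.head? := by
  cases v <;> simp

theorem cons_prefix_iff_prefix_rotate_one {x : α} {p v : List α} (h : p.length < v.length) :
    x :: p <+: v ↔ v.head? = some x ∧ p <+: v.rotate 1 := by
  cases v with
  | nil => simp at h
  | cons a u =>
    have hp : p <+: u ++ [a] ↔ p <+: u :=
      ⟨fun hp => List.prefix_of_prefix_length_le hp (List.prefix_append u [a])
        (Nat.le_of_lt_succ h), fun hp => hp.trans (List.prefix_append u [a])⟩
    simp [List.cons_prefix_cons, hp, eq_comm]

section Counting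

open Finset OrderDual

variable {ι : Type*}

theorem card_filter_comp_perm [Fintype ι] (σ : Equiv.Perm ι) (P : ι → Prop) [DecidablePred P] :
    #{i | P (σ i)} = #{i | P i} :=
  card_equiv σ (by simp)

theorem card_filter_and_not_add_card_filter (s : Finset ι) {P Q : ι → Prop} [DecidablePred P]
    [DecidablePred Q] (h : ∀ t ∈ s, Q t → P t) :
    #{t ∈ s | P t ∧ ¬ Q t} + #{t ∈ s | Q t} = #{t ∈ s | P t} := by
  classical rw [filter_and_not, card_sdiff_add_card_eq_card (monotone_filter_right s h)]

/-- The position `t` of the word `L`, seen in the order on positions by increasing letter and, among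
equal letters, by decreasing position: the order in which the alternating Burrows–Wheeler matrix
lists the left rotations of its rows. -/
def lastKey (L : ι → α) (t : ι) : α ×ₗ ιᵒᵈ := toLex (L t, toDual t)

variable [LinearOrder α] [LinearOrder ι] {L : ι → α} {x : α}

theorem lastKey_lt_iff {s t : ι} : lastKey L s < lastKey L t ↔ L s < L t ∨ L s = L t ∧ t < s :=
  Prod.Lex.toLex_lt_toLex

theorem lastKey_lt_toLex_iff {t e : ι} :
    lastKey L t < toLex (x, toDual e) ↔ L t ≤ x ∧ ¬ (t ≤ e ∧ L t = x) := by
  simp only [lastKey, Prod.Lex.toLex_lt_toLex', toDual_lt_toDual]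
  grind

theorem lastKey_le_toLex_iff {t b : ι} :
    lastKey L t ≤ toLex (x, toDual b) ↔ L t ≤ x ∧ ¬ (t < b ∧ L t = x) := by
  simp only [lastKey, Prod.Lex.toLex_le_toLex', toDual_le_toDual]
  grind

theorem lastKey_mem_Icc_iff {t b e : ι} :
    lastKey L t ∈ Set.Icc (toLex (x, toDual e)) (toLex (x, toDual b)) ↔
      L t = x ∧ t ∈ Set.Icc b e := by
  simp only [lastKey, Set.mem_Icc, Prod.Lex.toLex_le_toLex', toDual_le_toDual]
  grind

variable [Fintype ι]

theorem card_lastKey_lt_toLex_add (L : ι → α) (x : α) (e : ι) :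
    #{t | lastKey L t < toLex (x, toDual e)} + #{t | t ≤ e ∧ L t = x} = #{t | L t ≤ x} := by
  simp only [lastKey_lt_toLex_iff]
  exact card_filter_and_not_add_card_filter _ fun _ _ ht => ht.2.le

theorem card_lastKey_le_toLex_add (L : ι → α) (x : α) (b : ι) :
    #{t | lastKey L t ≤ toLex (x, toDual b)} + #{t | t < b ∧ L t = x} = #{t | L t ≤ x} := by
  simp only [lastKey_le_toLex_iff]
  exact card_filter_and_not_add_card_filter _ fun _ _ ht => ht.2.le

theorem apply_perm_eq_and_mem_Icc_iff {n : ℕ} {L : Fin n → α} {σ : Equiv.Perm (Fin n)}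
    (hσ : Monotone (lastKey L ∘ σ)) (x : α) (b e i : Fin n) :
    L (σ i) = x ∧ σ i ∈ Set.Icc b e ↔
      #{t | L t ≤ x} ≤ i + #{t | t ≤ e ∧ L t = x} ∧
        i + #{t | t < b ∧ L t = x} < #{t | L t ≤ x} := by
  have hlower : i < #{t | lastKey L t < toLex (x, toDual e)} ↔
      lastKey L (σ i) < toLex (x, toDual e) := by
    rw [← card_filter_comp_perm σ]
    exact Tuple.lt_card_lt_iff_apply_lt_of_monotone hσ
  have hupper : i < #{t | lastKey L t ≤ toLex (x, toDual b)} ↔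
      lastKey L (σ i) ≤ toLex (x, toDual b) := by
    rw [← card_filter_comp_perm σ]
    exact Tuple.lt_card_le_iff_apply_le_of_monotone hσ
  have hcard_lower := card_lastKey_lt_toLex_add L x e
  have hcard_upper := card_lastKey_le_toLex_add L x b
  rw [← lastKey_mem_Icc_iff, Set.mem_Icc, ← not_lt, ← hlower, ← hupper]
  omega

end Counting

section Matrix

variable [LinearOrder α]

/-- `rows` is the matrix `M_alt(w)`: its rows are the rotations of `w`, in strictly increasing
alternating lexicographic order. -/
structure IsAltMatrix (w : List α) (rows : Fin w.length → List α) : Prop where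
  range_eq : Set.range rows = Set.range fun j : Fin w.length => w.rotate j
  altLt : ∀ i j, i < j → AltLt (rows i) (rows j)

theorem Primitive.isAltMatrix {w : List α} (hw : Primitive w) {rows : Fin w.length → List α}
    (hrows : ∀ j : Fin w.length, ∃ i, rows i = w.rotate j)
    (hsorted : ∀ i j, i < j → AltLt (rows i) (rows j)) : IsAltMatrix w rows where
  altLt := hsorted
  range_eq := by
    choose g hg using hrows
    have hg_inj : Function.Injective g := fun j k hjk =>
      Fin.ext (hw j k j.2 k.2 (by rw [← hg, ← hg, hjk]))
    rw [← (Finite.surjective_of_injective hg_inj).range_comp rows]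
    exact congrArg Set.range (funext hg)

namespace IsAltMatrix

variable {w : List α} {rows : Fin w.length → List α}

theorem injective (h : IsAltMatrix w rows) : Function.Injective rows :=
  (RelEmbedding.ofMonotone rows h.altLt).injective

theorem altLt_iff (h : IsAltMatrix w rows) {i j : Fin w.length} :
    AltLt (rows i) (rows j) ↔ i < j :=
  (RelEmbedding.ofMonotone rows h.altLt).map_rel_iff

theorem exists_eq_rotate (h : IsAltMatrix w rows) (i : Fin w.length) :
    ∃ j : Fin w.length, w.rotate j = rows i :=
  h.range_eq.subset ⟨i, rfl⟩

theorem length_row (h : IsAltMatrix w rows) (i : Fin w.length) : (rows i).length = w.length := by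
  obtain ⟨j, hj⟩ := h.exists_eq_rotate i
  rw [← hj, List.length_rotate]

theorem exists_row_eq_rotate_one (h : IsAltMatrix w rows) (i : Fin w.length) :
    ∃ j, rows j = (rows i).rotate 1 := by
  obtain ⟨k, hk⟩ := h.exists_eq_rotate i
  rw [← hk, List.rotate_rotate, ← List.rotate_mod]
  exact h.range_eq.superset ⟨⟨_, Nat.mod_lt _ k.pos⟩, rfl⟩

theorem exists_perm_row_eq_rotate_one (h : IsAltMatrix w rows) :
    ∃ σ : Equiv.Perm (Fin w.length), ∀ i, rows (σ i) = (rows i).rotate 1 := by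
  choose f hf using h.exists_row_eq_rotate_one
  have hf_inj : Function.Injective f := fun i j hij =>
    h.injective (List.rotate_injective 1 (by simp only [← hf, hij]))
  exact ⟨Equiv.ofBijective f (Finite.injective_iff_bijective.mp hf_inj), hf⟩

variable {L : Fin w.length → α} {σ : Equiv.Perm (Fin w.length)}

theorem strictMono_lastKey_comp (h : IsAltMatrix w rows)
    (hσ : ∀ i, rows (σ i) = (rows i).rotate 1) (hL : ∀ i, (rows i).head? = some (L (σ i))) :
    StrictMono (lastKey L ∘ σ) := by
  intro i j hij
  obtain ⟨u, hu⟩ := List.head?_eq_some_iff.mp (hL i)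
  obtain ⟨v, hv⟩ := List.head?_eq_some_iff.mp (hL j)
  have huv : u.length = v.length := by
    have hlen := (h.length_row i).trans (h.length_row j).symm
    rwa [hu, hv, List.length_cons, List.length_cons, Nat.succ_inj] at hlen
  have hlt := h.altLt i j hij
  rw [hu, hv, altLt_cons_cons_iff_rotate huv, ← hu, ← hv, ← hσ, ← hσ, h.altLt_iff] at hlt
  exact lastKey_lt_iff.mpr hlt

end IsAltMatrix

end Matrix

/-- backward search for the ABWT: if the rows of the ≼_alt-sorted
rotation matrix prefixed by `p` form the nonempty interval `[b,e]`, then for a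
symbol `x`, setting `C` = number of positions `t` with `L t ≤ x`,
`b' = C − rank_x(L,e)` and `e' = C − rank_x(L,b−1) − 1`, the rows prefixed by
`x :: p` are exactly those with index in `[b',e']` (an empty set when
`b' > e'`, in which case `x :: p` is not a circular factor of `w`). -/
theorem abwt_backward_search [LinearOrder α] (n : ℕ) (w : List α)
    (hw : w.length = n) (hprim : Primitive w)
    (rows : Fin n → List α) (L : Fin n → α)
    (hrows : ∀ j : Fin n, ∃ i : Fin n, rows i = w.rotate j.val)
    (hsorted : ∀ i j : Fin n, i < j → AltLt (rows i) (rows j))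
    (hL : ∀ i, (rows i).getLast? = some (L i))
    (p : List α) (hp : p.length < n) (b e : Fin n) (hble : b ≤ e)
    (hbe : ∀ i : Fin n, p <+: rows i ↔ (b ≤ i ∧ i ≤ e))
    (x : α) :
    ∀ i : Fin n, (x :: p) <+: rows i ↔
      (((Finset.univ.filter fun t : Fin n => L t ≤ x).card : ℤ)
          - ((Finset.univ.filter fun t : Fin n => t ≤ e ∧ L t = x).card : ℤ)
        ≤ (i : ℤ)
      ∧ (i : ℤ) ≤
        ((Finset.univ.filter fun t : Fin n => L t ≤ x).card : ℤ)
          - ((Finset.univ.filter fun t : Fin n => t < b ∧ L t = x).card : ℤ) - 1) := by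
  subst hw
  have hM : IsAltMatrix w rows := hprim.isAltMatrix hrows hsorted
  obtain ⟨σ, hσ⟩ := hM.exists_perm_row_eq_rotate_one
  have hhead (i) : (rows i).head? = some (L (σ i)) := by rw [← getLast?_rotate_one, ← hσ, hL]
  have hmono : Monotone (lastKey L ∘ σ) := (hM.strictMono_lastKey_comp hσ hhead).monotone
  intro i
  have hprefix : x :: p <+: rows i ↔ L (σ i) = x ∧ σ i ∈ Set.Icc b e := by
    rw [cons_prefix_iff_prefix_rotate_one (hp.trans_eq (hM.length_row i).symm), hhead, ← hσ, hbe,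
      Option.some_inj, Set.mem_Icc]
  rw [hprefix, apply_perm_eq_and_mem_Icc_iff hmono]
  omega

end Paper
end

section
/- Let Σ be a finite alphabet with |Σ| ≥ 2 and let K = (π_0, π_1, …, π_{k−1}) be a tuple of linear orders on Σ with π_0 = Id. If there exists an index i with 0 ≤ i ≤ k−3 such that π_i = Rev, π_{i+1} = Id and π_{i+2} ≠ Rev, then BWT_K is not rank-invertible. -/
/-!
For letters `a ≠ b`, the word `a^p b a^q b` with `p < q` has exactly two rotations ending in `b`,
namely `a^p b a^q b` and `a^q b a^p b`, and they first differ at position `p`. Rotating both right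
by one moves this first difference to position `p + 1`. Hence LF preserves the order of the two rows
exactly when the orders at positions `p` and `p + 1` agree on `{a, b}`. A rank-inverting function
only sees the Parikh vector, which depends on `p + q` alone, so whether consecutive orders agree on
`{a, b}` cannot depend on `p`.
-/

namespace Paper

variable {α : Type*}

/-- Generalized lexicographic strict order on equal-length words determined by a
sequence `σ` of strict orders, one per position (`σ d` is used at position `d`). -/
def KLt (σ : ℕ → α → α → Prop) : ℕ → List α → List α → Prop
  | _, [], _ => False
  | _, _ :: _, [] => False
  | d, a :: x, b :: y => σ d a b ∨ (a = b ∧ KLt σ (d + 1) x y)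

/-- Rank-invertibility of the generalized BWT determined by the sequence of
per-position strict orders `σ`: there is a function `f` computing `LF i` from
the Parikh vector of the last column `L`, the symbol `L i`, and the number of
occurrences of `L i` in `L[0..i]`. -/
def RankInvertible [LinearOrder α] (σ : ℕ → α → α → Prop) : Prop :=
  ∃ f : (α → ℕ) → α → ℕ → ℕ,
    ∀ (n : ℕ) (w : List α), w.length = n → Primitive w →
      ∀ (rows : Fin n → List α) (L : Fin n → α) (LF : Fin n → Fin n),
        (∀ j : Fin n, ∃ i : Fin n, rows i = w.rotate j.val) →
        (∀ i j : Fin n, i < j → KLt σ 0 (rows i) (rows j)) →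
        (∀ i, (rows i).getLast? = some (L i)) →
        (∀ i, rows (LF i) = (rows i).rotate ((rows i).length - 1)) →
        ∀ i : Fin n, (LF i : ℕ) =
          f (fun c => (List.ofFn L).count c) (L i)
            (((List.ofFn L).take (i.val + 1)).count (L i))

theorem exists_equiv_fin_lt_iff {β : Type*} [Fintype β] (r : β → β → Prop)
    [IsStrictTotalOrder β r] {n : ℕ} (hn : Fintype.card β = n) :
    ∃ e : β ≃ Fin n, ∀ x y, e x < e y ↔ r x y := by
  classical
  let _ := linearOrderOfSTO r
  let e := (Fintype.orderIsoFinOfCardEq β hn).symm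
  exact ⟨e.toEquiv, fun _ _ => e.lt_iff_lt⟩

theorem not_rel_iff_rel_swap {r : α → α → Prop} [Std.Trichotomous r] [Std.Asymm r] {a b : α}
    (hab : a ≠ b) : ¬ r a b ↔ r b a :=
  ⟨fun h => ((trichotomous_of r a b).resolve_left h).resolve_left hab, fun h => asymm h⟩

theorem count_take_of_count_eq_two [DecidableEq α] {l : List α} {c : α} (hc : l.count c = 2)
    {i j : ℕ} (hij : i < j) (hi : l[i]? = some c) (hj : l[j]? = some c) :
    (l.take (i + 1)).count c = 1 ∧ (l.take (j + 1)).count c = 2 := by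
  have count_take_succ {m : ℕ} (hm : l[m]? = some c) :
      (l.take (m + 1)).count c = (l.take m).count c + 1 := by
    simp [List.take_add_one, hm]
  have hle : (l.take (i + 1)).count c ≤ (l.take j).count c :=
    (List.take_sublist_take_left hij).count_le c
  have htotal : (l.take (j + 1)).count c ≤ l.count c := (List.take_sublist _ l).count_le c
  have hrank_i := count_take_succ hi
  have hrank_j := count_take_succ hj
  lia

theorem rotate_finRotate (w : List α) (s : Fin w.length) :
    w.rotate (finRotate w.length s) = w.rotate (s + 1) := by
  have := s.neZero
  rw [finRotate_apply, Fin.val_add, Fin.val_one', Nat.add_mod_mod, List.rotate_mod]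

theorem getLast?_rotate_succ (w : List α) (s : Fin w.length) :
    (w.rotate (s + 1)).getLast? = some w[s] := by
  rw [List.rotate_eq_drop_append_take s.isLt, List.take_add_one, List.getLast?_append,
    List.getLast?_append]
  simp

theorem rotate_succ_rotate_length_sub_one {w : List α} (hw : 0 < w.length) (s : ℕ) :
    (w.rotate (s + 1)).rotate (w.length - 1) = w.rotate s := by
  rw [List.rotate_rotate, show s + 1 + (w.length - 1) = w.length + s by lia,
    ← List.rotate_rotate, List.rotate_length]

namespace KLt

variable {σ : ℕ → α → α → Prop} {d : ℕ}

theorem append_left_iff [∀ m, Std.Irrefl (σ m)] (u x y : List α) :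
    KLt σ d (u ++ x) (u ++ y) ↔ KLt σ (d + u.length) x y := by
  induction u generalizing d with
  | nil => simp
  | cons c u ih => simp [KLt, ih, irrefl, Nat.add_assoc, Nat.add_comm 1]

theorem append_cons_iff [∀ m, Std.Irrefl (σ m)] {a b : α} (hab : a ≠ b) (u x y : List α) :
    KLt σ d (u ++ a :: x) (u ++ b :: y) ↔ σ (d + u.length) a b := by
  simp [append_left_iff, KLt, hab]

theorem not_self [∀ m, Std.Irrefl (σ m)] (x : List α) : ¬ KLt σ d x x := by
  have h := append_left_iff (σ := σ) (d := d) x [] []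
  rw [List.append_nil] at h
  exact h.not.2 id

theorem trans [∀ m, IsTrans α (σ m)] {x y z : List α} (hxy : KLt σ d x y) (hyz : KLt σ d y z) :
    KLt σ d x z := by
  induction x generalizing d y z with
  | nil => simp [KLt] at hxy
  | cons a x ih =>
    match y, z with
    | [], _ => simp [KLt] at hxy
    | _ :: _, [] => simp [KLt] at hyz
    | b :: y, c :: z =>
      rcases hxy with hab | ⟨rfl, hxy⟩ <;> rcases hyz with hbc | ⟨rfl, hyz⟩
      · exact .inl (_root_.trans hab hbc)
      · exact .inl hab
      · exact .inl hbc
      · exact .inr ⟨rfl, ih hxy hyz⟩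

theorem eq_of_not [∀ m, Std.Trichotomous (σ m)] {x y : List α} (hlen : x.length = y.length)
    (hxy : ¬ KLt σ d x y) (hyx : ¬ KLt σ d y x) : x = y := by
  induction x generalizing d y with
  | nil => exact (List.length_eq_zero_iff.1 hlen.symm).symm
  | cons a x ih =>
    match y with
    | b :: y =>
      simp only [KLt, not_or, not_and] at hxy hyx
      obtain rfl : a = b := Std.Trichotomous.trichotomous a b hxy.1 hyx.1
      rw [ih (Nat.succ.inj hlen) (hxy.2 rfl) (hyx.2 rfl)]

end KLt

theorem primitive_of_rotate_ne {w : List α}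
    (h : ∀ d, 0 < d → d < w.length → w.rotate d ≠ w) : Primitive w := by
  have hlt {i j : ℕ} (hij : i < j) (hj : j < w.length) : w.rotate i ≠ w.rotate j := by
    rw [← Nat.sub_add_cancel hij.le, ← List.rotate_rotate, Ne, List.rotate_eq_rotate]
    exact (h (j - i) (by lia) (by lia)).symm
  intro i j hi hj hrot
  by_contra hij
  rcases Nat.lt_or_gt_of_ne hij with hij | hji
  · exact hlt hij hj hrot
  · exact hlt hji hi hrot.symm

section RotationOrder

variable (σ : ℕ → α → α → Prop) [∀ m, IsStrictTotalOrder α (σ m)] {w : List α}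

theorem Primitive.isStrictTotalOrder_rotate (hw : Primitive w) :
    IsStrictTotalOrder (Fin w.length) fun s t => KLt σ 0 (w.rotate s) (w.rotate t) where
  irrefl _ := KLt.not_self _
  trans _ _ _ := KLt.trans
  trichotomous s t hst hts :=
    Fin.ext <| hw s t s.isLt t.isLt <| KLt.eq_of_not (by simp) hst hts

theorem Primitive.exists_rotation_rank (hw : Primitive w) :
    ∃ e : Equiv.Perm (Fin w.length),
      ∀ s t, e s < e t ↔ KLt σ 0 (w.rotate s) (w.rotate t) :=
  have := hw.isStrictTotalOrder_rotate σ
  exists_equiv_fin_lt_iff _ (Fintype.card_fin _)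

end RotationOrder

namespace RankInvertible

variable [LinearOrder α] {σ : ℕ → α → α → Prop} [∀ m, IsStrictTotalOrder α (σ m)]

/-- Rows are indexed through the rotations of `w`: the rotation by `s` is row `e s`, and LF sends
the row of the rotation by `s + 1`, whose last symbol is `w[s]`, to row `e s`. -/
theorem exists_rank_formula (h : RankInvertible σ) :
    ∃ f : (α → ℕ) → α → ℕ → ℕ, ∀ w : List α, Primitive w →
      ∃ (e : Equiv.Perm (Fin w.length)) (L : List α), L.Perm w ∧
        (∀ s t, e s < e t ↔ KLt σ 0 (w.rotate s) (w.rotate t)) ∧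
        (∀ s, L[(e (finRotate _ s) : ℕ)]? = some w[s]) ∧
        ∀ s, (e s : ℕ) =
          f (fun c => w.count c) w[s] ((L.take (e (finRotate _ s) + 1)).count w[s]) := by
  obtain ⟨f, hf⟩ := h
  refine ⟨f, fun w hw => ?_⟩
  obtain ⟨e, he⟩ := hw.exists_rotation_rank σ
  let row : Equiv.Perm (Fin w.length) := (finRotate w.length).trans e
  let L : Fin w.length → α := fun i => w[row.symm i]
  have hLw : (List.ofFn L).Perm w := by
    have h := Equiv.Perm.ofFn_comp_perm row.symm fun s : Fin w.length => w[s]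
    rwa [show List.ofFn (fun s : Fin w.length => w[s]) = w from List.ofFn_getElem] at h
  have hL (s) : L (row s) = w[s] := by simp [L]
  have hrow (s) : w.rotate (e.symm (row s)) = w.rotate (s + 1) := by
    rw [show e.symm (row s) = finRotate _ s from e.symm_apply_apply _, rotate_finRotate]
  refine ⟨e, List.ofFn L, hLw, he, fun s => ?_, fun s => ?_⟩
  · simpa [row] using hL s
  · have hrank := hf _ w rfl hw (fun i => w.rotate (e.symm i)) L (fun i => e (row.symm i))
      (fun s => ⟨e s, by simp⟩)
      (fun i j hij => (he _ _).1 (by simpa using hij))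
      (row.surjective.forall.2 fun s => by rw [hrow, getLast?_rotate_succ, hL])
      (row.surjective.forall.2 fun s => by
        rw [hrow, List.length_rotate, rotate_succ_rotate_length_sub_one s.pos,
          row.symm_apply_apply, e.symm_apply_apply])
      (row s)
    simp only [hL, hLw.count_eq, row.symm_apply_apply] at hrank
    exact hrank

/-- The predicate `g P c` is `f P c 1 < f P c 2`, where `f` computes LF. -/
theorem exists_kLt_rotate_iff (h : RankInvertible σ) :
    ∃ g : (α → ℕ) → α → Prop, ∀ w : List α, Primitive w → ∀ c, w.count c = 2 →
      ∀ s t : ℕ, w[s]? = some c → w[t]? = some c →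
        KLt σ 0 (w.rotate (s + 1)) (w.rotate (t + 1)) →
          (g (fun x => w.count x) c ↔ KLt σ 0 (w.rotate s) (w.rotate t)) := by
  obtain ⟨f, hf⟩ := h.exists_rank_formula
  refine ⟨fun P c => f P c 1 < f P c 2, fun w hw c hc s t hs ht hst => ?_⟩
  obtain ⟨e, L, hLw, he, hL, hrank⟩ := hf w hw
  obtain ⟨hslt, hs⟩ := List.getElem?_eq_some_iff.1 hs
  obtain ⟨htlt, ht⟩ := List.getElem?_eq_some_iff.1 ht
  lift s to Fin w.length using hslt
  lift t to Fin w.length using htlt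
  rw [← rotate_finRotate, ← rotate_finRotate, ← he] at hst
  obtain ⟨hcount_s, hcount_t⟩ := count_take_of_count_eq_two ((hLw.count_eq c).trans hc) hst
    ((hL s).trans (congrArg some hs)) ((hL t).trans (congrArg some ht))
  have hrank_s := hrank s
  have hrank_t := hrank t
  simp only [Fin.getElem_fin, hs, ht, hcount_s, hcount_t] at hrank_s hrank_t
  rw [← he, ← Fin.val_fin_lt, hrank_s, hrank_t]

end RankInvertible

/-- The word `a^p b a^(p+s+1) b`. Its two blocks of `a`s have different lengths, which makes it
primitive, and `s` adjusts the total length without affecting where the two rotations ending in `b`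
first differ. -/
def twoBlockWord (a b : α) (p s : ℕ) : List α :=
  List.replicate p a ++ b :: (List.replicate (p + s + 1) a ++ [b])

section TwoBlockWord

variable {a b : α} (p s : ℕ)

theorem length_twoBlockWord : (twoBlockWord a b p s).length = 2 * p + s + 3 := by
  simp only [twoBlockWord, List.length_append, List.length_cons, List.length_replicate,
    List.length_nil]
  lia

theorem getElem?_twoBlockWord_eq_some_iff (hab : a ≠ b) {m : ℕ} :
    (twoBlockWord a b p s)[m]? = some b ↔ m = p ∨ m = 2 * p + s + 2 := by
  simp only [twoBlockWord, List.getElem?_append, List.getElem?_cons, List.length_replicate,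
    List.getElem?_replicate]
  grind

theorem count_twoBlockWord [DecidableEq α] (hab : a ≠ b) :
    (twoBlockWord a b p s).count b = 2 := by
  simp [twoBlockWord, List.count_replicate, hab]

theorem twoBlockWord_perm {p s p' s' : ℕ} (h : 2 * p + s = 2 * p' + s') :
    (twoBlockWord a b p s).Perm (twoBlockWord a b p' s') := by
  classical
  rw [List.perm_iff_count]
  intro c
  simp only [twoBlockWord, List.count_append, List.count_cons, List.count_replicate,
    List.count_nil]
  split_ifs <;> lia

theorem primitive_twoBlockWord (hab : a ≠ b) : Primitive (twoBlockWord a b p s) := by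
  refine primitive_of_rotate_ne fun d hd hdlen hrot => ?_
  have hlen := length_twoBlockWord (a := a) (b := b) p s
  have hb (m : ℕ) := getElem?_twoBlockWord_eq_some_iff p s hab (m := m)
  have hshift {m : ℕ} (hm : m < 2 * p + s + 3) (hmb : m = p ∨ m = 2 * p + s + 2) :
      (m + d) % (2 * p + s + 3) = p ∨ (m + d) % (2 * p + s + 3) = 2 * p + s + 2 := by
    rwa [← hb, ← hlen, ← List.getElem?_rotate (hlen ▸ hm), hrot, hb]
  have hlast := hshift (Nat.lt_succ_self _) (.inr rfl)
  rw [show 2 * p + s + 2 + d = d - 1 + (2 * p + s + 3) by lia, Nat.add_mod_right,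
    Nat.mod_eq_of_lt (by lia)] at hlast
  obtain rfl : d = p + 1 := by lia
  have hfirst := hshift (m := p) (by lia) (.inl rfl)
  rw [Nat.mod_eq_of_lt (by lia)] at hfirst
  lia

theorem twoBlockWord_eq_replicate_append :
    twoBlockWord a b p s =
      List.replicate p a ++ b :: (List.replicate p a ++ a :: (List.replicate s a ++ [b])) := by
  simp [twoBlockWord, Nat.add_assoc p, List.replicate_add p, List.replicate_succ]

theorem rotate_twoBlockWord_fst :
    (twoBlockWord a b p s).rotate p =
      b :: (List.replicate p a ++ a :: (List.replicate s a ++ b :: List.replicate p a)) := by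
  have h := List.rotate_append_length_eq (List.replicate p a)
    (b :: (List.replicate p a ++ a :: (List.replicate s a ++ [b])))
  rw [List.length_replicate] at h
  simp [twoBlockWord_eq_replicate_append, h]

theorem rotate_twoBlockWord_fst_succ :
    (twoBlockWord a b p s).rotate (p + 1) =
      List.replicate p a ++ a :: (List.replicate s a ++ b :: (List.replicate p a ++ [b])) := by
  rw [← List.rotate_rotate, rotate_twoBlockWord_fst]
  simp

theorem rotate_twoBlockWord_snd :
    (twoBlockWord a b p s).rotate (2 * p + s + 2) =
      b :: (List.replicate p a ++ b :: List.replicate (p + s + 1) a) := by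
  have h := List.rotate_append_length_eq
    (List.replicate p a ++ b :: List.replicate (p + s + 1) a) [b]
  have hlen : (List.replicate p a ++ b :: List.replicate (p + s + 1) a).length =
      2 * p + s + 2 := by
    simp only [List.length_append, List.length_cons, List.length_replicate]
    lia
  rw [hlen] at h
  simpa [twoBlockWord] using h

theorem rotate_twoBlockWord_snd_succ :
    (twoBlockWord a b p s).rotate (2 * p + s + 2 + 1) = twoBlockWord a b p s := by
  rw [← length_twoBlockWord (a := a) (b := b), List.rotate_length]

variable {σ : ℕ → α → α → Prop} [∀ m, Std.Irrefl (σ m)]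

theorem kLt_rotate_twoBlockWord_fst_snd_iff (hab : a ≠ b) :
    KLt σ 0 ((twoBlockWord a b p s).rotate p) ((twoBlockWord a b p s).rotate (2 * p + s + 2)) ↔
      σ (p + 1) a b := by
  rw [rotate_twoBlockWord_fst, rotate_twoBlockWord_snd]
  simpa using KLt.append_cons_iff (σ := σ) (d := 0) hab (b :: List.replicate p a) _ _

theorem kLt_rotate_twoBlockWord_snd_fst_iff (hab : a ≠ b) :
    KLt σ 0 ((twoBlockWord a b p s).rotate (2 * p + s + 2)) ((twoBlockWord a b p s).rotate p) ↔
      σ (p + 1) b a := by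
  rw [rotate_twoBlockWord_fst, rotate_twoBlockWord_snd]
  simpa using KLt.append_cons_iff (σ := σ) (d := 0) hab.symm (b :: List.replicate p a) _ _

theorem kLt_rotate_twoBlockWord_fst_succ_snd_succ_iff (hab : a ≠ b) :
    KLt σ 0 ((twoBlockWord a b p s).rotate (p + 1))
      ((twoBlockWord a b p s).rotate (2 * p + s + 2 + 1)) ↔ σ p a b := by
  rw [rotate_twoBlockWord_fst_succ, rotate_twoBlockWord_snd_succ, twoBlockWord,
    KLt.append_cons_iff hab, List.length_replicate, Nat.zero_add]

theorem kLt_rotate_twoBlockWord_snd_succ_fst_succ_iff (hab : a ≠ b) :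
    KLt σ 0 ((twoBlockWord a b p s).rotate (2 * p + s + 2 + 1))
      ((twoBlockWord a b p s).rotate (p + 1)) ↔ σ p b a := by
  rw [rotate_twoBlockWord_fst_succ, rotate_twoBlockWord_snd_succ, twoBlockWord,
    KLt.append_cons_iff hab.symm, List.length_replicate, Nat.zero_add]

end TwoBlockWord

namespace RankInvertible

variable [LinearOrder α] {σ : ℕ → α → α → Prop} [∀ m, IsStrictTotalOrder α (σ m)]

theorem exists_twoBlockWord_iff (h : RankInvertible σ) :
    ∃ g : (α → ℕ) → α → Prop, ∀ (a b : α) (p s : ℕ), a ≠ b →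
      (g (fun x => (twoBlockWord a b p s).count x) b ↔ (σ p a b ↔ σ (p + 1) a b)) := by
  obtain ⟨g, hg⟩ := h.exists_kLt_rotate_iff
  refine ⟨g, fun a b p s hab => ?_⟩
  have hfst := (getElem?_twoBlockWord_eq_some_iff p s hab).2 (.inl rfl)
  have hsnd := (getElem?_twoBlockWord_eq_some_iff p s hab).2 (.inr rfl)
  have hw := hg _ (primitive_twoBlockWord p s hab) b (count_twoBlockWord p s hab)
  by_cases hp : σ p a b
  · rw [hw _ _ hfst hsnd ((kLt_rotate_twoBlockWord_fst_succ_snd_succ_iff p s hab).2 hp),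
      kLt_rotate_twoBlockWord_fst_snd_iff p s hab, iff_true_left hp]
  · have hp_swap : σ p b a := (not_rel_iff_rel_swap hab).1 hp
    rw [hw _ _ hsnd hfst ((kLt_rotate_twoBlockWord_snd_succ_fst_succ_iff p s hab).2 hp_swap),
      kLt_rotate_twoBlockWord_snd_fst_iff p s hab, iff_false_left hp, not_rel_iff_rel_swap hab]

theorem rel_iff_rel_succ_congr (h : RankInvertible σ) (i j : ℕ) {a b : α} (hab : a ≠ b) :
    (σ i a b ↔ σ (i + 1) a b) ↔ (σ j a b ↔ σ (j + 1) a b) := by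
  obtain ⟨g, hg⟩ := h.exists_twoBlockWord_iff
  have hparikh : (fun x => (twoBlockWord a b i (2 * j)).count x) =
      fun x => (twoBlockWord a b j (2 * i)).count x :=
    funext (twoBlockWord_perm (Nat.add_comm _ _)).count_eq
  rw [← hg a b i (2 * j) hab, ← hg a b j (2 * i) hab, hparikh]

theorem succ_eq_swap (h : RankInvertible σ) {i j : ℕ} (hi : σ (i + 1) = Function.swap (σ i)) :
    σ (j + 1) = Function.swap (σ j) := by
  ext a b
  obtain rfl | hab := eq_or_ne a b
  · simp [Function.swap, irrefl]
  · have hagree := h.rel_iff_rel_succ_congr i j hab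
    simp only [hi, Function.swap, ← not_rel_iff_rel_swap hab] at hagree ⊢
    tauto

end RankInvertible

theorem bwtK_triplet_rev_id_not_rank_invertible_general [LinearOrder α]
    {σ : ℕ → α → α → Prop} [∀ m, IsStrictTotalOrder α (σ m)] {i j : ℕ}
    (hi : σ (i + 1) = Function.swap (σ i)) (hj : σ (j + 1) ≠ Function.swap (σ j)) :
    ¬ RankInvertible σ :=
  fun h => hj (h.succ_eq_swap hi)

/-- for a finite alphabet with at least two symbols and a tuple
`K = (π 0, …, π (k-1))` with `π 0 = Id`, if `K` contains a triplet
`(Rev, Id, π)` with `π ≠ Rev` (i.e. `π i = Rev`, `π (i+1) = Id`,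
`π (i+2) ≠ Rev` for some `i ≤ k−3`), then `BWT_K` is not rank-invertible. -/
theorem bwtK_triplet_rev_id_not_rank_invertible [LinearOrder α] [Fintype α]
    (hcard : 2 ≤ Fintype.card α)
    (k : ℕ) (hk : 0 < k) (π : Fin k → α → α → Prop)
    (horder : ∀ t, IsStrictTotalOrder α (π t))
    (h0 : π ⟨0, hk⟩ = fun a b : α => a < b)
    (i : ℕ) (hik : i + 2 < k)
    (hi : π ⟨i, by omega⟩ = fun a b : α => b < a)
    (hi1 : π ⟨i + 1, by omega⟩ = fun a b : α => a < b)
    (hi2 : π ⟨i + 2, hik⟩ ≠ fun a b : α => b < a) :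
    ¬ RankInvertible (fun d => π ⟨d % k, Nat.mod_lt d hk⟩) := by
  have (m : ℕ) : IsStrictTotalOrder α (π ⟨m % k, Nat.mod_lt m hk⟩) := horder _
  apply bwtK_triplet_rev_id_not_rank_invertible_general (i := i) (j := i + 1) <;>
    simp (disch := lia) [Nat.mod_eq_of_lt, hi, hi1, hi2]

end Paper
end

section
/- Let Σ be a finite alphabet with |Σ| ≥ 2 and let K = (π_0, π_1, …, π_{k−1}) be a tuple of linear orders on Σ with π_0 = Id. Then BWT_K is rank-invertible if and only if the induced infinite sequence of orders σ_j = π_{j mod k} (for j ≥ 0) satisfies either σ_j = Id for all j (in which case BWT_K coincides with the Burrows-Wheeler Transform) or σ_j = Id for all even j and σ_j = Rev for all odd j (in which case BWT_K coincides with the Alternating Burrows-Wheeler Transform). In other words, the BWT and the ABWT are the only rank-invertible transformations of the form BWT_K. -/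
namespace Paper

variable {α : Type*}

/-!
Write a row ending in the symbol `c` as `r ++ [c]`; LF sends it to the row `c :: r`. Rows that end
in different symbols are therefore mapped in the order `σ 0` of these symbols, while two rows
`r ++ [c]`, `s ++ [c]` are compared through `r`, `s` with `σ` started at depth `0`, and their images
with `σ` started at depth `1`. If the sequence `σ` is invariant under the shift, or is reversed by
it, then LF preserves, respectively reverses, the order of the rows ending in `c`, so the Parikh
vector and the rank determine LF.

Conversely, a rank-inverse `f` has to decide from the Parikh vector alone whether LF swaps the two
rows ending in `x`, where `x` is a symbol occurring exactly twice. For the word `x u x u y t`, with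
`x` not occurring in `u`, `t`, they are kept in order iff `σ |u|` and `σ (|u| + 1)` agree on the
pair `x, y`. The words `x y^p x y^p y z` and `x x z y^(2p+1)` have the same Parikh vector, and this
spreads (dis)agreement of consecutive orders from one pair of symbols and one depth to all of them.
-/

open Finset Function

section Sequences

variable {β : Type*} {s : ℕ → β}

theorem forall_succ_eq_self_iff : (∀ d, s (d + 1) = s d) ↔ ∀ d, s d = s 0 := by
  refine ⟨fun h d => ?_, fun h d => (h (d + 1)).trans (h d).symm⟩
  induction d with
  | zero => rfl
  | succ d ih => rw [h, ih]

theorem forall_succ_eq_apply_iff_of_involutive {g : β → β} (hg : Involutive g) :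
    (∀ d, s (d + 1) = g (s d)) ↔
      ∀ d, (Even d → s d = s 0) ∧ (¬ Even d → s d = g (s 0)) := by
  constructor
  · intro h d
    induction d with
    | zero => simp
    | succ d ih =>
      rw [Nat.even_add_one, h, not_not]
      exact ⟨fun hd => by rw [ih.2 hd, hg], fun hd => by rw [ih.1 hd]⟩
  · intro h d
    by_cases hd : Even d
    · rw [(h d).1 hd, (h (d + 1)).2 (by rwa [Nat.even_add_one, not_not])]
    · rw [(h d).2 hd, (h (d + 1)).1 (by rwa [Nat.even_add_one]), hg]

end Sequences

section StrictTotalOrder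

theorem rel_iff_not_rel_swap (r : α → α → Prop) [IsStrictTotalOrder α r] {a b : α}
    (hab : a ≠ b) : r a b ↔ ¬ r b a :=
  ⟨fun h => asymm_of r h, fun h => by_contra fun h' =>
    hab (Std.Trichotomous.trichotomous (r := r) a b h' h)⟩

theorem exists_equiv_fin_forall_lt_rel {β : Type*} [Fintype β] (r : β → β → Prop)
    [IsStrictTotalOrder β r] {n : ℕ} (hn : Fintype.card β = n) :
    ∃ e : Fin n ≃ β, ∀ i j, i < j → r (e i) (e j) := by
  classical
  let := linearOrderOfSTO r
  let e := Fintype.orderIsoFinOfCardEq β hn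
  exact ⟨e.toEquiv, fun _ _ => e.lt_iff_lt.2⟩

end StrictTotalOrder

section Counting

theorem card_filter_apply_lt {n : ℕ} {g : Fin n → Fin n} (hg : Injective g) (i : Fin n) :
    #{j | g j < g i} = (g i : ℕ) := by
  rw [← Fin.card_Iio (g i)]
  exact card_bijective g (Finite.injective_iff_bijective.1 hg) (by simp)

variable [DecidableEq α] {n : ℕ}

theorem count_take_ofFn (L : Fin n → α) (c : α) (m : ℕ) :
    ((List.ofFn L).take m).count c = #{j | L j = c ∧ (j : ℕ) < m} := by
  induction n generalizing m with
  | zero => simp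
  | succ n ih =>
    cases m with
    | zero => simp
    | succ m =>
      rw [List.ofFn_succ, List.take_succ_cons, List.count_cons, ih, Fin.card_filter_univ_succ]
      simp only [beq_iff_eq, Fin.val_zero, Fin.val_succ, Nat.succ_lt_succ_iff, Nat.succ_pos,
        and_true]
      split_ifs <;> simp [add_comm]

theorem count_ofFn (L : Fin n → α) (c : α) : (List.ofFn L).count c = #{j | L j = c} := by
  have h := count_take_ofFn L c n
  rw [List.take_of_length_le (List.length_ofFn.le)] at h
  simpa only [Fin.is_lt, and_true] using h

theorem count_take_succ_ofFn_self (L : Fin n → α) (i : Fin n) :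
    ((List.ofFn L).take (i + 1)).count (L i) = ((List.ofFn L).take i).count (L i) + 1 := by
  rw [List.take_succ_eq_append_getElem (by simp), List.count_append]
  simp

theorem count_take_succ_ofFn_add_card (L : Fin n → α) (i : Fin n) (c : α) :
    ((List.ofFn L).take (i + 1)).count c + #{j | L j = c ∧ i < j} = (List.ofFn L).count c := by
  rw [count_take_ofFn, count_ofFn, ← filter_filter, ← filter_filter,
    ← card_filter_add_card_filter_not (s := {j | L j = c}) (· ≤ i)]
  simp only [Nat.lt_succ_iff, Fin.val_fin_le, not_le]

theorem count_take_ofFn_of_count_eq_two {L : Fin n → α} {i j : Fin n} {c : α}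
    (hc : (List.ofFn L).count c = 2) (hij : i < j) (hi : L i = c) (hj : L j = c) :
    ((List.ofFn L).take (i + 1)).count c = 1 ∧ ((List.ofFn L).take (j + 1)).count c = 2 := by
  have hi' := count_take_succ_ofFn_self L i
  have hj' := count_take_succ_ofFn_self L j
  rw [hi] at hi'
  rw [hj] at hj'
  have hmono : ((List.ofFn L).take (i + 1)).count c ≤ ((List.ofFn L).take j).count c :=
    (List.take_sublist_take_left (Nat.succ_le_of_lt hij)).count_le c
  have htotal : ((List.ofFn L).take (j + 1)).count c ≤ 2 :=
    hc ▸ (List.take_sublist _ _).count_le c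
  omega

theorem finsum_mem_count_ofFn (L : Fin n → α) (s : Set α) [DecidablePred (· ∈ s)] :
    ∑ᶠ a ∈ s, (List.ofFn L).count a = #{j | L j ∈ s} := by
  rw [card_eq_sum_card_image L, finsum_mem_eq_sum_of_subset (t := image L {j | L j ∈ s})]
  · refine sum_congr rfl fun a ha => ?_
    obtain ⟨j, hj, rfl⟩ := mem_image.1 ha
    rw [count_ofFn, filter_filter]
    congr 1 with k
    simp_all
  · rintro a ⟨has, ha⟩
    obtain ⟨j, rfl⟩ := (List.mem_ofFn' L a).1 (List.count_pos_iff.1 (Nat.pos_of_ne_zero ha))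
    simpa using ⟨j, has, rfl⟩
  · intro a ha
    obtain ⟨j, hj, rfl⟩ := mem_image.1 (mem_coe.1 ha)
    exact (mem_filter.1 hj).2

end Counting

section KLt

variable {σ : ℕ → α → α → Prop}

instance KLt.instIrrefl [∀ d, Std.Irrefl (σ d)] (d : ℕ) : Std.Irrefl (KLt σ d) where
  irrefl x := by
    induction x generalizing d with
    | nil => exact id
    | cons a x ih =>
      rintro (h | ⟨-, h⟩)
      · exact irrefl_of (σ d) a h
      · exact ih (d + 1) h

instance KLt.instIsTrans [∀ d, IsTrans α (σ d)] (d : ℕ) : IsTrans (List α) (KLt σ d) where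
  trans x y z := by
    induction x generalizing d y z with
    | nil => exact fun h _ => h.elim
    | cons a x ih =>
      cases y with
      | nil => exact fun h _ => h.elim
      | cons b y =>
        cases z with
        | nil => exact fun _ h => h.elim
        | cons c z =>
          rintro (hab | ⟨rfl, hxy⟩) (hbc | ⟨rfl, hyz⟩)
          · exact Or.inl (trans_of (σ d) hab hbc)
          · exact Or.inl hab
          · exact Or.inl hbc
          · exact Or.inr ⟨rfl, ih (d + 1) y z hxy hyz⟩

theorem KLt.eq_of_not_s14 [∀ d, Std.Trichotomous (σ d)] {d : ℕ} {x y : List α}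
    (hlen : x.length = y.length) (hxy : ¬ KLt σ d x y) (hyx : ¬ KLt σ d y x) : x = y := by
  induction x generalizing d y with
  | nil => exact (List.length_eq_zero_iff.1 hlen.symm).symm
  | cons a x ih =>
    cases y with
    | nil => simp at hlen
    | cons b y =>
      simp only [KLt, not_or, not_and] at hxy hyx
      obtain rfl : a = b := Std.Trichotomous.trichotomous (r := σ d) a b hxy.1 hyx.1
      rw [ih (Nat.succ_injective hlen) (hxy.2 rfl) (hyx.2 rfl)]

theorem KLt_append_left_iff [∀ d, Std.Irrefl (σ d)] (u x y : List α) (d : ℕ) :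
    KLt σ d (u ++ x) (u ++ y) ↔ KLt σ (d + u.length) x y := by
  induction u generalizing d with
  | nil => rfl
  | cons c u ih =>
    simp only [List.cons_append, KLt, irrefl_of (σ d) c, true_and, false_or, ih,
      List.length_cons, add_assoc, add_comm 1]

theorem KLt_append_right_iff [∀ d, Std.Irrefl (σ d)] {x y : List α}
    (hlen : x.length = y.length) (z : List α) (d : ℕ) :
    KLt σ d (x ++ z) (y ++ z) ↔ KLt σ d x y := by
  induction x generalizing d y with
  | nil =>
    obtain rfl : y = [] := List.length_eq_zero_iff.1 hlen.symm
    simp only [irrefl_of (KLt σ d)]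
  | cons a x ih =>
    cases y with
    | nil => simp at hlen
    | cons b y => simp only [List.cons_append, KLt, ih (Nat.succ_injective hlen)]

theorem KLt_append_cons_iff_of_ne [∀ d, Std.Irrefl (σ d)] {a b : α} (hab : a ≠ b)
    (u x y : List α) (d : ℕ) :
    KLt σ d (u ++ a :: x) (u ++ b :: y) ↔ σ (d + u.length) a b := by
  rw [KLt_append_left_iff]
  simp only [KLt, hab, false_and, or_false]

theorem KLt_succ_iff_of_const (hσ : ∀ d, σ (d + 1) = σ d) (d : ℕ) (x y : List α) :
    KLt σ (d + 1) x y ↔ KLt σ d x y := by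
  induction x generalizing d y with
  | nil => rfl
  | cons a x ih =>
    cases y with
    | nil => rfl
    | cons b y => simp only [KLt, hσ, ih]

theorem KLt_succ_iff_of_swap (hσ : ∀ d, σ (d + 1) = swap (σ d)) (d : ℕ) (x y : List α) :
    KLt σ (d + 1) x y ↔ KLt σ d y x := by
  induction x generalizing d y with
  | nil => cases y <;> rfl
  | cons a x ih =>
    cases y with
    | nil => rfl
    | cons b y => simp only [KLt, hσ d, swap, ih, eq_comm]

end KLt

/-- The data entering `RankInvertible`: `rows` is the sorted matrix of the rotations of the
primitive word `w` of length `n`, `L` is its last column and `LF` its LF-mapping. -/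
structure IsBWTMatrix (σ : ℕ → α → α → Prop) {n : ℕ} (w : List α) (rows : Fin n → List α)
    (L : Fin n → α) (LF : Fin n → Fin n) : Prop where
  length_eq : w.length = n
  primitive : Primitive w
  exists_row_eq_rotate (j : Fin n) : ∃ i, rows i = w.rotate j
  KLt_of_lt (i j : Fin n) : i < j → KLt σ 0 (rows i) (rows j)
  getLast?_row (i : Fin n) : (rows i).getLast? = some (L i)
  row_LF (i : Fin n) : rows (LF i) = (rows i).rotate ((rows i).length - 1)

namespace IsBWTMatrix

variable {σ : ℕ → α → α → Prop} {n : ℕ} {w : List α} {rows : Fin n → List α} {L : Fin n → α}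
  {LF : Fin n → Fin n}

theorem exists_equiv_row_eq_rotate (M : IsBWTMatrix σ w rows L LF) :
    ∃ e : Fin n ≃ Fin n, ∀ i, rows i = w.rotate (e i) := by
  choose g hg using M.exists_row_eq_rotate
  have hg_inj : Injective g := fun i j hij => Fin.ext <|
    M.primitive i j (M.length_eq ▸ i.2) (M.length_eq ▸ j.2) (by rw [← hg, ← hg, hij])
  let e := Equiv.ofBijective g (Finite.injective_iff_bijective.1 hg_inj)
  exact ⟨e.symm, fun i => by rw [← hg]; exact congrArg rows (e.apply_symm_apply i).symm⟩

theorem length_row (M : IsBWTMatrix σ w rows L LF) (i : Fin n) : (rows i).length = n := by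
  obtain ⟨e, he⟩ := M.exists_equiv_row_eq_rotate
  rw [he, List.length_rotate, M.length_eq]

theorem dropLast_row_append (M : IsBWTMatrix σ w rows L LF) (i : Fin n) :
    (rows i).dropLast ++ [L i] = rows i :=
  List.dropLast_append_getLast? _ (M.getLast?_row i)

theorem row_LF_eq_cons (M : IsBWTMatrix σ w rows L LF) (i : Fin n) :
    rows (LF i) = L i :: (rows i).dropLast := by
  rw [M.row_LF, ← List.length_dropLast]
  nth_rw 1 [← M.dropLast_row_append i]
  exact List.rotate_append_length_eq _ _

theorem ofFn_perm (M : IsBWTMatrix σ w rows L LF) (hLF : Injective LF) :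
    (List.ofFn L).Perm w := by
  obtain rfl := M.length_eq
  obtain ⟨e, he⟩ := M.exists_equiv_row_eq_rotate
  let τ : Equiv.Perm (Fin w.length) :=
    (Equiv.ofBijective LF (Finite.injective_iff_bijective.1 hLF)).trans e
  have hL : L = w.get ∘ τ := by
    funext i
    have hhead : (w.rotate (τ i))[0]? = some (L i) := by
      simp only [τ, Equiv.trans_apply, Equiv.ofBijective_apply, ← he, M.row_LF_eq_cons,
        List.getElem?_cons_zero]
    rw [List.getElem?_rotate i.pos, zero_add, Nat.mod_eq_of_lt (τ i).2,
      List.getElem?_eq_getElem (τ i).2] at hhead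
    exact (Option.some.inj hhead).symm
  rw [hL]
  simpa only [List.ofFn_get] using Equiv.Perm.ofFn_comp_perm τ w.get

section Order

variable [∀ d, Std.Irrefl (σ d)] [∀ d, IsTrans α (σ d)]

/-- The rows of a sorted rotation matrix, as an order embedding of the row indices. -/
def rowEmbedding (M : IsBWTMatrix σ w rows L LF) : ((· < ·) : Fin n → Fin n → Prop) ↪r KLt σ 0 :=
  have : Std.Asymm (KLt σ 0) := ⟨fun _ _ h h' => irrefl_of (KLt σ 0) _ (trans_of (KLt σ 0) h h')⟩
  RelEmbedding.ofMonotone rows M.KLt_of_lt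

theorem LF_injective (M : IsBWTMatrix σ w rows L LF) : Injective LF := by
  intro i j hij
  have hcons : L i :: (rows i).dropLast = L j :: (rows j).dropLast := by
    rw [← M.row_LF_eq_cons, ← M.row_LF_eq_cons, hij]
  obtain ⟨hL, hx⟩ := List.cons.inj hcons
  exact M.rowEmbedding.injective <|
    show rows i = rows j by rw [← M.dropLast_row_append, ← M.dropLast_row_append j, hL, hx]

theorem lt_iff_KLt_dropLast (M : IsBWTMatrix σ w rows L LF) {i j : Fin n} (hij : L i = L j) :
    i < j ↔ KLt σ 0 (rows i).dropLast (rows j).dropLast := by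
  have hlen : (rows i).dropLast.length = (rows j).dropLast.length := by
    rw [List.length_dropLast, List.length_dropLast, M.length_row, M.length_row]
  rw [← KLt_append_right_iff hlen [L i], M.dropLast_row_append, hij, M.dropLast_row_append]
  exact M.rowEmbedding.map_rel_iff.symm

theorem LF_lt_LF_iff (M : IsBWTMatrix σ w rows L LF) (i j : Fin n) :
    LF i < LF j ↔
      σ 0 (L i) (L j) ∨ L i = L j ∧ KLt σ 1 (rows i).dropLast (rows j).dropLast := by
  have hrows : LF i < LF j ↔ KLt σ 0 (rows (LF i)) (rows (LF j)) :=
    M.rowEmbedding.map_rel_iff.symm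
  rw [hrows, M.row_LF_eq_cons, M.row_LF_eq_cons, KLt]

open Classical in
theorem LF_eq_finsum_add_card [DecidableEq α] (M : IsBWTMatrix σ w rows L LF) (i : Fin n) :
    (LF i : ℕ) = ∑ᶠ a ∈ {a | σ 0 a (L i)}, (List.ofFn L).count a +
      #{j | L j = L i ∧ KLt σ 1 (rows j).dropLast (rows i).dropLast} := by
  have hdisj : Disjoint (α := Finset (Fin n)) {j | σ 0 (L j) (L i)}
      {j | L j = L i ∧ KLt σ 1 (rows j).dropLast (rows i).dropLast} :=
    disjoint_filter.2 fun j _ hlt heq => irrefl_of (σ 0) (L i) (heq.1 ▸ hlt)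
  rw [← card_filter_apply_lt M.LF_injective, finsum_mem_count_ofFn]
  simp only [M.LF_lt_LF_iff, Set.mem_ofPred_eq, filter_or, card_union_of_disjoint hdisj]

end Order

end IsBWTMatrix

theorem Primitive.exists_isBWTMatrix {w : List α} (hw : Primitive w) (σ : ℕ → α → α → Prop)
    [∀ d, IsStrictTotalOrder α (σ d)] :
    ∃ (rows : Fin w.length → List α) (L : Fin w.length → α) (LF : Fin w.length → Fin w.length),
      IsBWTMatrix σ w rows L LF := by
  let r : Fin w.length → Fin w.length → Prop := fun i j => KLt σ 0 (w.rotate i) (w.rotate j)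
  have hr : IsStrictTotalOrder (Fin w.length) r :=
    { irrefl := fun _ => irrefl_of (KLt σ 0) _
      trans := fun _ _ _ => trans_of (KLt σ 0)
      trichotomous := fun i j hij hji =>
        Fin.ext (hw i j i.2 j.2 (KLt.eq_of_not_s14 (by simp) hij hji)) }
  obtain ⟨e, he⟩ := exists_equiv_fin_forall_lt_rel r (Fintype.card_fin _)
  have hrow (j : Fin w.length) : ∃ i, w.rotate (e i) = w.rotate j := ⟨e.symm j, by simp⟩
  have hLF (i : Fin w.length) : ∃ i', w.rotate (e i') =
      (w.rotate (e i)).rotate ((w.rotate (e i)).length - 1) := by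
    rw [List.rotate_rotate, ← List.rotate_mod]
    exact hrow ⟨_, Nat.mod_lt _ i.pos⟩
  have hlast (i : Fin w.length) : ∃ c, (w.rotate (e i)).getLast? = some c := by
    refine ⟨_, List.getLast?_eq_some_getLast (List.ne_nil_of_length_pos ?_)⟩
    exact (List.length_rotate w _).symm ▸ i.pos
  choose LF hLF using hLF
  choose L hL using hlast
  exact ⟨fun i => w.rotate (e i), L, LF, rfl, hw, hrow, he, hL, hLF⟩

/-- `f` computes the LF-mapping of every `BWT_K` matrix from the Parikh vector, the symbol and its
rank, i.e. it is a function `f_K` witnessing `RankInvertible σ`. -/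
def IsRankInverse [DecidableEq α] (σ : ℕ → α → α → Prop) (f : (α → ℕ) → α → ℕ → ℕ) : Prop :=
  ∀ ⦃n : ℕ⦄ ⦃w : List α⦄ ⦃rows : Fin n → List α⦄ ⦃L : Fin n → α⦄ ⦃LF : Fin n → Fin n⦄,
    IsBWTMatrix σ w rows L LF → ∀ i : Fin n, (LF i : ℕ) =
      f (fun c => (List.ofFn L).count c) (L i) (((List.ofFn L).take (i + 1)).count (L i))

theorem rankInvertible_iff_exists_isRankInverse [LinearOrder α] {σ : ℕ → α → α → Prop} :
    RankInvertible σ ↔ ∃ f, IsRankInverse σ f :=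
  exists_congr fun _ =>
    ⟨fun hf _ _ _ _ _ M => hf _ _ M.length_eq M.primitive _ _ _ M.exists_row_eq_rotate M.KLt_of_lt
      M.getLast?_row M.row_LF,
    fun hf _ _ hn hw _ _ _ hrow hlt hL hLF => hf ⟨hn, hw, hrow, hlt, hL, hLF⟩⟩

section Sufficiency

variable [DecidableEq α] {σ : ℕ → α → α → Prop} [∀ d, Std.Irrefl (σ d)] [∀ d, IsTrans α (σ d)]

theorem isRankInverse_of_const (hσ : ∀ d, σ (d + 1) = σ d) :
    IsRankInverse σ fun P c r => ∑ᶠ a ∈ {a | σ 0 a c}, P a + (r - 1) := by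
  classical
  intro n w rows L LF M i
  have horder (j : Fin n) : (L j = L i ∧ KLt σ 1 (rows j).dropLast (rows i).dropLast) ↔
      (L j = L i ∧ (j : ℕ) < i) :=
    and_congr_right fun hj => by
      rw [KLt_succ_iff_of_const hσ, ← M.lt_iff_KLt_dropLast hj, Fin.lt_def]
  simp only [M.LF_eq_finsum_add_card, count_take_succ_ofFn_self, Nat.add_sub_cancel,
    count_take_ofFn, horder]

theorem isRankInverse_of_swap (hσ : ∀ d, σ (d + 1) = swap (σ d)) :
    IsRankInverse σ fun P c r => ∑ᶠ a ∈ {a | σ 0 a c}, P a + (P c - r) := by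
  classical
  intro n w rows L LF M i
  have horder (j : Fin n) : (L j = L i ∧ KLt σ 1 (rows j).dropLast (rows i).dropLast) ↔
      (L j = L i ∧ i < j) :=
    and_congr_right fun hj => by
      rw [KLt_succ_iff_of_swap hσ, ← M.lt_iff_KLt_dropLast hj.symm]
  have hcount := count_take_succ_ofFn_add_card L i (L i)
  simp only [M.LF_eq_finsum_add_card, ← hcount, Nat.add_sub_cancel_left, horder]

end Sufficiency

theorem primitive_of_forall_rotate_ne {w : List α}
    (hw : ∀ d, 0 < d → d < w.length → w.rotate d ≠ w) : Primitive w := by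
  intro i j hi hj hij
  wlog hlt : i < j generalizing i j
  · by_contra hne
    exact hne (this j i hj hi hij.symm (by omega)).symm
  refine absurd (List.rotate_injective i ?_) (hw (j - i) (by omega) (by omega))
  simp only [List.rotate_rotate, Nat.sub_add_cancel hlt.le, hij]

/-- The word `x u x u y t`. If `x` occurs in neither `u` nor `t`, its two rotations ending in `x`
first differ at position `|u|`, where they carry `x` and `y`. -/
def doubledWord (x : α) (u : List α) (y : α) (t : List α) : List α :=
  x :: (u ++ x :: (u ++ y :: t))

section DoubledWord

variable {x y : α} {u t : List α}

theorem length_doubledWord : (doubledWord x u y t).length = 2 * u.length + 3 + t.length := by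
  simp only [doubledWord, List.length_cons, List.length_append]
  omega

theorem rotate_one_doubledWord :
    (doubledWord x u y t).rotate 1 = (u ++ x :: (u ++ y :: t)) ++ [x] := by
  simp [doubledWord]

theorem rotate_length_add_two_doubledWord :
    (doubledWord x u y t).rotate (u.length + 2) = (u ++ y :: (t ++ x :: u)) ++ [x] := by
  simpa [doubledWord] using List.rotate_append_length_eq (x :: (u ++ [x])) (u ++ y :: t)

theorem count_doubledWord_self [DecidableEq α] (hu : x ∉ u) (ht : x ∉ t) (hxy : x ≠ y) :
    (doubledWord x u y t).count x = 2 := by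
  simp [doubledWord, List.count_eq_zero_of_not_mem hu,
    List.count_eq_zero_of_not_mem ht, hxy.symm]

theorem getElem?_doubledWord_eq_some_self_iff (hu : x ∉ u) (ht : x ∉ t) (hxy : x ≠ y) {d : ℕ} :
    (doubledWord x u y t)[d]? = some x ↔ d = 0 ∨ d = u.length + 1 := by
  refine ⟨fun hd => ?_, by rintro (rfl | rfl) <;> simp [doubledWord]⟩
  cases d with
  | zero => exact Or.inl rfl
  | succ d =>
    rw [doubledWord, List.getElem?_cons_succ] at hd
    rcases lt_trichotomy d u.length with hlt | rfl | hgt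
    · rw [List.getElem?_append_left hlt] at hd
      exact absurd (List.mem_of_getElem? hd) hu
    · exact Or.inr rfl
    · obtain ⟨m, rfl⟩ := Nat.exists_eq_add_of_lt hgt
      rw [List.getElem?_append_right hgt.le, add_assoc, Nat.add_sub_cancel_left,
        List.getElem?_cons_succ] at hd
      have hmem := List.mem_of_getElem? hd
      simp [hu, ht, hxy] at hmem

theorem primitive_doubledWord (hu : x ∉ u) (ht : x ∉ t) (hxy : x ≠ y) :
    Primitive (doubledWord x u y t) := by
  refine primitive_of_forall_rotate_ne fun d hpos hd hrot => ?_
  have hlen := length_doubledWord (x := x) (y := y) (u := u) (t := t)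
  have hiff {m : ℕ} := getElem?_doubledWord_eq_some_self_iff hu ht hxy (d := m)
  have hshift {m : ℕ} (hm : m = 0 ∨ m = u.length + 1) :
      (m + d) % (doubledWord x u y t).length = 0 ∨
        (m + d) % (doubledWord x u y t).length = u.length + 1 := by
    rw [← hiff, ← List.getElem?_rotate (by omega), hrot]
    exact hiff.2 hm
  have hd_eq : d = u.length + 1 := by
    have h := hshift (Or.inl rfl)
    rw [Nat.mod_eq_of_lt (by omega)] at h
    omega
  have h := hshift (Or.inr rfl)
  rw [Nat.mod_eq_of_lt (by omega)] at h
  omega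

end DoubledWord

section Necessity

variable {σ : ℕ → α → α → Prop} [∀ d, IsStrictTotalOrder α (σ d)]

namespace IsRankInverse

variable [DecidableEq α] {f : (α → ℕ) → α → ℕ → ℕ}

theorem lt_iff_KLt (hf : IsRankInverse σ f) {w r s : List α} {x : α} (hw : Primitive w)
    (hx : w.count x = 2) {i j : Fin w.length} (hi : w.rotate i = r ++ [x])
    (hj : w.rotate j = s ++ [x]) (hrs : KLt σ 0 r s) :
    f (fun c => w.count c) x 1 < f (fun c => w.count c) x 2 ↔ KLt σ 1 r s := by
  obtain ⟨rows, L, LF, M⟩ := hw.exists_isBWTMatrix σ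
  have hcount (c : α) : (List.ofFn L).count c = w.count c :=
    (M.ofFn_perm M.LF_injective).count_eq c
  obtain ⟨a, ha⟩ := M.exists_row_eq_rotate i
  obtain ⟨b, hb⟩ := M.exists_row_eq_rotate j
  have hLa : L a = x := by simpa [ha, hi] using (M.getLast?_row a).symm
  have hLb : L b = x := by simpa [hb, hj] using (M.getLast?_row b).symm
  have hxa : (rows a).dropLast = r := by rw [ha, hi, List.dropLast_concat]
  have hxb : (rows b).dropLast = s := by rw [hb, hj, List.dropLast_concat]
  have hab : a < b := by rwa [M.lt_iff_KLt_dropLast (hLa.trans hLb.symm), hxa, hxb]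
  obtain ⟨hrank_a, hrank_b⟩ := count_take_ofFn_of_count_eq_two ((hcount x).trans hx) hab hLa hLb
  have hfa := hf M a
  have hfb := hf M b
  simp only [hcount, hLa, hLb, hrank_a, hrank_b] at hfa hfb
  rw [← hfa, ← hfb, ← Fin.lt_def, M.LF_lt_LF_iff, hLa, hLb, hxa, hxb]
  simp only [irrefl_of (σ 0) x, true_and, false_or]

theorem lt_iff_rel_iff_rel (hf : IsRankInverse σ f) {x y : α} {u t : List α} (hu : x ∉ u)
    (ht : x ∉ t) (hxy : x ≠ y) :
    f (fun c => (doubledWord x u y t).count c) x 1 <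
        f (fun c => (doubledWord x u y t).count c) x 2 ↔
      (σ u.length x y ↔ σ (u.length + 1) x y) := by
  have hprim := primitive_doubledWord hu ht hxy
  have hcount := count_doubledWord_self hu ht hxy
  have hlen := length_doubledWord (x := x) (y := y) (u := u) (t := t)
  let i : Fin (doubledWord x u y t).length := ⟨1, by omega⟩
  let j : Fin (doubledWord x u y t).length := ⟨u.length + 2, by omega⟩
  have hi : (doubledWord x u y t).rotate i = _ := rotate_one_doubledWord
  have hj : (doubledWord x u y t).rotate j = _ := rotate_length_add_two_doubledWord
  have hij := KLt_append_cons_iff_of_ne (σ := σ) hxy u (u ++ y :: t) (t ++ x :: u)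
  have hji := KLt_append_cons_iff_of_ne (σ := σ) hxy.symm u (t ++ x :: u) (u ++ y :: t)
  by_cases h : σ u.length x y
  · rw [hf.lt_iff_KLt hprim hcount hi hj ((hij 0).2 (by rwa [zero_add])), hij, add_comm 1]
    simp only [h, true_iff]
  · have h' : σ u.length y x := (rel_iff_not_rel_swap _ hxy.symm).2 h
    rw [hf.lt_iff_KLt hprim hcount hj hi ((hji 0).2 (by rwa [zero_add])), hji, add_comm 1,
      rel_iff_not_rel_swap (σ (u.length + 1)) hxy.symm]
    simp only [h, false_iff]

theorem rel_iff_rel_succ_iff_zero (hf : IsRankInverse σ f) {x y z : α} (hxy : x ≠ y)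
    (hxz : x ≠ z) (p : ℕ) : (σ p x y ↔ σ (p + 1) x y) ↔ (σ 0 x z ↔ σ 1 x z) := by
  have hparikh (c : α) : (doubledWord x (List.replicate p y) y [z]).count c =
      (doubledWord x [] z (List.replicate (2 * p + 1) y)).count c := by
    simp only [doubledWord, List.count_cons, List.count_append, List.count_replicate,
      List.count_nil, List.nil_append]
    split_ifs <;> omega
  have hleft := hf.lt_iff_rel_iff_rel (x := x) (y := y) (u := List.replicate p y) (t := [z])
    (by simp [List.mem_replicate, hxy]) (by simpa using hxz) hxy
  have hright := hf.lt_iff_rel_iff_rel (x := x) (y := z) (u := [])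
    (t := List.replicate (2 * p + 1) y) (by simp) (by simp [List.mem_replicate, hxy]) hxz
  simp only [hparikh, List.length_replicate] at hleft
  exact hleft.symm.trans hright

theorem rel_iff_rel_succ_iff (hf : IsRankInverse σ f) {x y a b : α} (hxy : x ≠ y) (hab : a ≠ b)
    (p q : ℕ) : (σ p x y ↔ σ (p + 1) x y) ↔ (σ q a b ↔ σ (q + 1) a b) := by
  have same_left {c z z' : α} (hz : c ≠ z) (hz' : c ≠ z') (p q : ℕ) :
      (σ p c z ↔ σ (p + 1) c z) ↔ (σ q c z' ↔ σ (q + 1) c z') :=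
    (hf.rel_iff_rel_succ_iff_zero hz hz' p).trans (hf.rel_iff_rel_succ_iff_zero hz' hz' q).symm
  obtain rfl | hxa := eq_or_ne x a
  · exact same_left hxy hab p q
  · have hsymm : (σ q x a ↔ σ (q + 1) x a) ↔ (σ q a x ↔ σ (q + 1) a x) := by
      rw [rel_iff_not_rel_swap (σ q) hxa, rel_iff_not_rel_swap (σ (q + 1)) hxa, not_iff_not]
    exact (same_left hxy hxa p q).trans (hsymm.trans (same_left hxa.symm hab q q))

theorem const_or_swap (hf : IsRankInverse σ f) :
    (∀ d, σ (d + 1) = σ d) ∨ ∀ d, σ (d + 1) = swap (σ d) := by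
  by_cases h : ∃ x y, x ≠ y ∧ (σ 0 x y ↔ σ 1 x y)
  · obtain ⟨x, y, hxy, hagree⟩ := h
    refine Or.inl fun d => funext₂ fun a b => propext ?_
    obtain rfl | hab := eq_or_ne a b
    · simp only [irrefl_of]
    · exact ((hf.rel_iff_rel_succ_iff hxy hab 0 d).1 hagree).symm
  · refine Or.inr fun d => funext₂ fun a b => propext ?_
    obtain rfl | hab := eq_or_ne a b
    · simp only [swap, irrefl_of]
    · have hdisagree : ¬ (σ d a b ↔ σ (d + 1) a b) := fun hagree =>
        h ⟨a, b, hab, (hf.rel_iff_rel_succ_iff hab hab d 0).1 hagree⟩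
      exact (not_iff.1 hdisagree).symm.trans (rel_iff_not_rel_swap (σ d) hab.symm).symm

end IsRankInverse

end Necessity

theorem rankInvertible_iff_succ [LinearOrder α] {σ : ℕ → α → α → Prop}
    [∀ d, IsStrictTotalOrder α (σ d)] :
    RankInvertible σ ↔ (∀ d, σ (d + 1) = σ d) ∨ ∀ d, σ (d + 1) = swap (σ d) := by
  rw [rankInvertible_iff_exists_isRankInverse]
  refine ⟨fun ⟨f, hf⟩ => hf.const_or_swap, ?_⟩
  rintro (hσ | hσ)
  · exact ⟨_, isRankInverse_of_const hσ⟩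
  · exact ⟨_, isRankInverse_of_swap hσ⟩

theorem bwtK_rank_invertible_iff_bwt_or_abwt_general [LinearOrder α] {σ : ℕ → α → α → Prop}
    [∀ d, IsStrictTotalOrder α (σ d)] :
    RankInvertible σ ↔ (∀ d, σ d = σ 0) ∨
      ∀ d, (Even d → σ d = σ 0) ∧ (¬ Even d → σ d = fun a b => σ 0 b a) := by
  rw [rankInvertible_iff_succ, forall_succ_eq_self_iff,
    forall_succ_eq_apply_iff_of_involutive (s := σ) (g := swap) fun _ => rfl]

/-- for a finite alphabet with at least two symbols and a tuple
`K = (π 0, …, π (k-1))` of linear orders with `π 0 = Id`, `BWT_K` is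
rank-invertible iff the induced infinite sequence `σ j = π (j % k)` is either
constantly `Id` (the BWT) or alternates `Id` at even positions and `Rev` at
odd positions (the ABWT). -/
theorem bwtK_rank_invertible_iff_bwt_or_abwt [LinearOrder α] [Fintype α]
    (hcard : 2 ≤ Fintype.card α)
    (k : ℕ) (hk : 0 < k) (π : Fin k → α → α → Prop)
    (horder : ∀ t, IsStrictTotalOrder α (π t))
    (h0 : π ⟨0, hk⟩ = fun a b : α => a < b) :
    RankInvertible (fun d => π ⟨d % k, Nat.mod_lt d hk⟩) ↔
      ((∀ d : ℕ, π ⟨d % k, Nat.mod_lt d hk⟩ = fun a b : α => a < b) ∨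
       (∀ d : ℕ,
          (Even d → π ⟨d % k, Nat.mod_lt d hk⟩ = fun a b : α => a < b) ∧
          (¬ Even d → π ⟨d % k, Nat.mod_lt d hk⟩ = fun a b : α => b < a))) := by
  have hz : π ⟨0 % k, Nat.mod_lt 0 hk⟩ = fun a b : α => a < b := by
    simpa only [Nat.zero_mod] using h0
  simpa only [hz] using
    bwtK_rank_invertible_iff_bwt_or_abwt_general (σ := fun d => π ⟨d % k, Nat.mod_lt d hk⟩)

end Paper
end
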